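/- arXiv:2108.06814 — 2 statements merged into one kernel-verified Lean document; each statement's English description precedes it below -/
import Mathlib

section
/- (Thurston's Stability Lemma) Let G be a finitely generated group acting on ℝ^n by C^1 diffeomorphisms with a global fixed point x. If the derivative Dg(x) is the identity linear map for every g ∈ G, then either there is a nontrivial group homomorphism from G into (ℝ,+), or G acts trivially (every element of G acts as the identity map on ℝ^n). -/
noncomputable section

/-!
Near a fixed point where every derivative is the identity, the displacements `g y - y` satisfy
`gh y - y = (g y - y) + (h y - y) + o(h y - y)` as `y` tends to that point. If some generator moves
points arbitrarily close to it, choose a generator `s` which is frequently the one moving `y` the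
most. All displacements are then `O(s y - y)`, and, dividing by `‖s y - y‖` and applying a
functional that norms `s y - y`, we get bounded real functions whose limits along an ultrafilter are
additive in `g`, with value `1` at `s`. As the functional is chosen separately for each `y`, it is
only in `ℝ`, not in the unit ball of the space, that limits have to exist. Hence, in the absence of
nontrivial homomorphisms to `ℝ`, the set of fixed points with identity derivative is open; it is
also closed, and the space is connected.
-/

open Filter Topology Asymptotics

section AsymptoticallyAdditive

variable {α G E F : Type*} [NormedAddCommGroup E]

/-- A family `a : G → α → E` is asymptotically additive along the filter `l` if the additivity
defect of `a` at `(g, h)` is negligible compared with `a h`; displacements under an action tangent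
to the identity are the model. The asymmetry between `g` and `h` is that of `g (h y)`. -/
def AsymptoticallyAdditive [Mul G] (l : Filter α) (a : G → α → E) : Prop :=
  ∀ g h, (fun y ↦ a (g * h) y - a g y - a h y) =o[l] a h

theorem AsymptoticallyAdditive.mono [Mul G] {l l' : Filter α} {a : G → α → E}
    (ha : AsymptoticallyAdditive l a) (hl : l' ≤ l) : AsymptoticallyAdditive l' a :=
  fun g h ↦ (ha g h).mono hl

theorem AsymptoticallyAdditive.apply_one_eventuallyEq_zero [MulOneClass G] {l : Filter α}
    {a : G → α → E} (ha : AsymptoticallyAdditive l a) : a 1 =ᶠ[l] 0 := by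
  have hself : a 1 =o[l] a 1 := by
    simpa only [mul_one, sub_self, zero_sub, isLittleO_neg_left] using ha 1 1
  by_contra hne
  exact isLittleO_irrefl (not_eventually.1 hne) hself

theorem AsymptoticallyAdditive.isBigO_of_closure_eq_top [Group G] [SeminormedAddCommGroup F]
    {l : Filter α} {a : G → α → E} (ha : AsymptoticallyAdditive l a)
    {S : Set G} (hS : Subgroup.closure S = ⊤) {b : α → F} (hb : ∀ s ∈ S, a s =O[l] b)
    (g : G) : a g =O[l] b := by
  have hone : a 1 =O[l] b := ha.apply_one_eventuallyEq_zero.trans_isBigO (isBigO_zero b l)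
  have hg : g ∈ Subgroup.closure S := hS ▸ Subgroup.mem_top g
  induction hg using Subgroup.closure_induction with
  | mem s hs => exact hb s hs
  | one => exact hone
  | mul g h _ _ hg hh =>
    refine (((ha g h).isBigO.trans hh).add (hg.add hh)).congr_left fun y ↦ ?_
    abel
  | inv g _ hg =>
    refine (hone.sub (((ha g⁻¹ g).isBigO.trans hg).add hg)).congr_left fun y ↦ ?_
    rw [inv_mul_cancel]
    abel

theorem exists_monoidHom_of_tendsto_additivity_defect [MulOneClass G] [ProperSpace E]
    {l : Filter α} [NeBot l] {c : G → α → E}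
    (hbdd : ∀ g, IsBoundedUnder (· ≤ ·) l fun y ↦ ‖c g y‖)
    (hadd : ∀ g h, Tendsto (fun y ↦ c (g * h) y - c g y - c h y) l (𝓝 0)) :
    ∃ φ : G →* Multiplicative E, ∀ g v, Tendsto (c g) l (𝓝 v) → φ g = .ofAdd v := by
  have hU : (Ultrafilter.of l : Filter α) ≤ l := Ultrafilter.of_le l
  have hlim : ∀ g, ∃ v, Tendsto (c g) (Ultrafilter.of l) (𝓝 v) := fun g ↦ by
    obtain ⟨C, hC⟩ := hbdd g
    have hball : ∀ᶠ y in Ultrafilter.of l, c g y ∈ Metric.closedBall 0 C :=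
      hU <| (eventually_map.1 hC).mono fun y hy ↦ mem_closedBall_zero_iff.2 hy
    obtain ⟨v, -, hv⟩ := (isCompact_closedBall (0 : E) C).ultrafilter_le_nhds
      ((Ultrafilter.of l).map (c g)) (le_principal_iff.2 hball)
    exact ⟨v, hv⟩
  choose f hf using hlim
  have hmul (g h : G) : f (g * h) = f g + f h := by
    have hdefect : f (g * h) - f g - f h = 0 :=
      tendsto_nhds_unique (((hf _).sub (hf g)).sub (hf h)) ((hadd g h).mono_left hU)
    rwa [sub_sub, sub_eq_zero] at hdefect
  exact ⟨.mk' (fun g ↦ .ofAdd (f g)) fun g h ↦ by rw [hmul, ofAdd_add],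
    fun g v hv ↦ congrArg Multiplicative.ofAdd (tendsto_nhds_unique (hf g) (hv.mono_left hU))⟩

theorem AsymptoticallyAdditive.exists_monoidHom_of_isBigO [MulOneClass G] [NormedSpace ℝ E]
    {l : Filter α} [NeBot l] {a : G → α → E} (ha : AsymptoticallyAdditive l a) {s : G}
    (hs : ∀ᶠ y in l, a s y ≠ 0) (hO : ∀ g, a g =O[l] a s) :
    ∃ φ : G →* Multiplicative ℝ, φ s = .ofAdd 1 := by
  choose L hL_norm hL_self using fun y ↦ exists_dual_vector'' ℝ (a s y)
  have hL (v : α → E) : (fun y ↦ L y (v y)) =O[l] v :=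
    .of_bound' <| .of_forall fun y ↦ by
      simpa only [one_mul] using (L y).le_of_opNorm_le (hL_norm y) _
  have hnorm : ∀ᶠ y in l, ‖a s y‖ ≠ 0 := hs.mono fun y ↦ norm_ne_zero_iff.2
  let c : G → α → ℝ := fun g y ↦ L y (a g y) / ‖a s y‖
  have hbdd (g : G) : IsBoundedUnder (· ≤ ·) l fun y ↦ ‖c g y‖ := by
    simpa only [c, norm_div] using
      (isBigO_iff_isBoundedUnder_le_div hnorm).1 ((hL _).trans (hO g)).norm_right
  have hadd (g h : G) : Tendsto (fun y ↦ c (g * h) y - c g y - c h y) l (𝓝 0) := by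
    have hdefect := ((hL _).trans_isLittleO (ha g h)).trans_isBigO (hO h)
    simpa only [c, map_sub, sub_div] using hdefect.norm_right.tendsto_div_nhds_zero
  obtain ⟨φ, hφ⟩ := exists_monoidHom_of_tendsto_additivity_defect hbdd hadd
  refine ⟨φ, hφ s 1 (tendsto_const_nhds.congr' ?_)⟩
  filter_upwards [hnorm] with y hy
  simp only [c, hL_self, RCLike.ofReal_real_eq_id, id, div_self hy]

theorem exists_frequently_ne_zero_and_norm_le {ι : Type*} {l : Filter α} {S : Finset ι}
    {a : ι → α → E} (h : ∃ i ∈ S, ∃ᶠ y in l, a i y ≠ 0) :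
    ∃ i ∈ S, ∃ᶠ y in l, a i y ≠ 0 ∧ ∀ j ∈ S, ‖a j y‖ ≤ ‖a i y‖ := by
  obtain ⟨j, hj, hfreq⟩ := h
  refine (frequently_exists_finset S).1 (hfreq.mono fun y hy ↦ ?_)
  obtain ⟨i, hi, hmax⟩ := S.exists_max_image (fun i ↦ ‖a i y‖) ⟨j, hj⟩
  exact ⟨i, hi, norm_pos_iff.1 ((norm_pos_iff.2 hy).trans_le (hmax j hj)), hmax⟩

theorem AsymptoticallyAdditive.eventually_eq_zero [Group G] [NormedSpace ℝ E] {l : Filter α}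
    {a : G → α → E} (ha : AsymptoticallyAdditive l a) {S : Finset G}
    (hS : Subgroup.closure (S : Set G) = ⊤) (htriv : ∀ φ : G →* Multiplicative ℝ, φ = 1) :
    ∀ᶠ y in l, ∀ s ∈ S, a s y = 0 := by
  rw [eventually_all_finset]
  by_contra! hne
  obtain ⟨s, -, hfreq⟩ := exists_frequently_ne_zero_and_norm_le hne
  set l' := l ⊓ 𝓟 {y | a s y ≠ 0 ∧ ∀ t ∈ S, ‖a t y‖ ≤ ‖a s y‖}
  have : NeBot l' := frequently_mem_iff_neBot.1 hfreq
  have hdom : ∀ᶠ y in l', a s y ≠ 0 ∧ ∀ t ∈ S, ‖a t y‖ ≤ ‖a s y‖ :=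
    mem_inf_of_right (mem_principal_self _)
  have ha' : AsymptoticallyAdditive l' a := ha.mono inf_le_left
  have hO : ∀ g, a g =O[l'] a s := ha'.isBigO_of_closure_eq_top hS fun t ht ↦
    .of_bound' (hdom.mono fun y hy ↦ hy.2 t ht)
  obtain ⟨φ, hφ⟩ := ha'.exists_monoidHom_of_isBigO (hdom.mono fun _ ↦ And.left) hO
  rw [htriv φ] at hφ
  exact zero_ne_one (Multiplicative.ofAdd.injective hφ)

end AsymptoticallyAdditive

section Action

variable {G E : Type*} [NormedAddCommGroup E]

theorem asymptoticallyAdditive_displacement [MulOneClass G] {𝕜 : Type*}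
    [NontriviallyNormedField 𝕜] [NormedSpace 𝕜 E] {ρ : G →* Equiv.Perm E} {x : E}
    (hfix : ∀ g, ρ g x = x)
    (hρ : ∀ g, HasStrictFDerivAt (ρ g) (ContinuousLinearMap.id 𝕜 E) x) :
    AsymptoticallyAdditive (𝓝 x) fun g y ↦ ρ g y - y := fun g h ↦ by
  have hpair : Tendsto (fun y ↦ (ρ h y, y)) (𝓝 x) (𝓝 (x, x)) := by
    simpa only [hfix, id] using (hρ h).continuousAt.prodMk_nhds continuousAt_id
  refine ((hρ g).isLittleO.comp_tendsto hpair).congr_left fun y ↦ ?_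
  simp only [Function.comp_apply, map_mul, Equiv.Perm.mul_apply, ContinuousLinearMap.id_apply]
  abel

variable [NormedSpace ℝ E]

theorem eventually_forall_apply_eq_self [Group G] [Group.FG G] {ρ : G →* Equiv.Perm E} {x : E}
    (hfix : ∀ g, ρ g x = x) (hρ : ∀ g, HasStrictFDerivAt (ρ g) (ContinuousLinearMap.id ℝ E) x)
    (htriv : ∀ φ : G →* Multiplicative ℝ, φ = 1) :
    ∀ᶠ y in 𝓝 x, ∀ g, ρ g y = y := by
  obtain ⟨S, hS⟩ := Group.fg_def.1 ‹Group.FG G›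
  filter_upwards [(asymptoticallyAdditive_displacement hfix hρ).eventually_eq_zero hS htriv]
    with y hy g
  have hle : Subgroup.closure S ≤ (MulAction.stabilizer (Equiv.Perm E) y).comap ρ :=
    (Subgroup.closure_le _).2 fun s hs ↦ sub_eq_zero.1 (hy s hs)
  exact hle (hS ▸ Subgroup.mem_top g)

/-- The set of global fixed points of `ρ` at which every element of `G` has derivative the
identity; it is clopen for a `C¹` action of a finitely generated group without nontrivial
homomorphisms to `ℝ`. -/
def tangentFixedPoints [MulOneClass G] (ρ : G →* Equiv.Perm E) : Set E :=
  {y | ∀ g, ρ g y = y ∧ fderiv ℝ (ρ g) y = ContinuousLinearMap.id ℝ E}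

theorem isClosed_tangentFixedPoints [MulOneClass G] {ρ : G →* Equiv.Perm E}
    (hdiff : ∀ g, ContDiff ℝ 1 (ρ g)) : IsClosed (tangentFixedPoints ρ) := by
  simp only [tangentFixedPoints, Set.ofPred_forall, Set.ofPred_and]
  exact isClosed_iInter fun g ↦ (isClosed_eq (hdiff g).continuous continuous_id).inter
    (isClosed_eq ((hdiff g).continuous_fderiv one_ne_zero) continuous_const)

variable [Group G] [Group.FG G] {ρ : G →* Equiv.Perm E}

theorem isOpen_tangentFixedPoints (hdiff : ∀ g, ContDiff ℝ 1 (ρ g))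
    (htriv : ∀ φ : G →* Multiplicative ℝ, φ = 1) : IsOpen (tangentFixedPoints ρ) := by
  refine isOpen_iff_mem_nhds.2 fun y hy ↦ ?_
  have hstrict (g : G) : HasStrictFDerivAt (ρ g) (ContinuousLinearMap.id ℝ E) y :=
    (hy g).2 ▸ (hdiff g).contDiffAt.hasStrictFDerivAt one_ne_zero
  have hfixed := eventually_forall_apply_eq_self (fun g ↦ (hy g).1) hstrict htriv
  filter_upwards [hfixed.eventually_nhds] with z hz g
  have hid : ρ g =ᶠ[𝓝 z] id := hz.mono fun w hw ↦ hw g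
  exact ⟨hid.self_of_nhds, hid.fderiv_eq.trans fderiv_id⟩

theorem thurston_stability_general (hdiff : ∀ g, ContDiff ℝ 1 (ρ g)) (x : E)
    (hfix : ∀ g, ρ g x = x) (hD : ∀ g, fderiv ℝ (ρ g) x = ContinuousLinearMap.id ℝ E) :
    (∃ φ : G →* Multiplicative ℝ, φ ≠ 1) ∨ ∀ g y, ρ g y = y := by
  refine or_iff_not_imp_left.2 fun hno g y ↦ ?_
  push Not at hno
  have hclopen : IsClopen (tangentFixedPoints ρ) :=
    ⟨isClosed_tangentFixedPoints hdiff, isOpen_tangentFixedPoints hdiff hno⟩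
  have huniv : tangentFixedPoints ρ = Set.univ :=
    hclopen.eq_univ ⟨x, fun g ↦ ⟨hfix g, hD g⟩⟩
  exact ((huniv ▸ Set.mem_univ y : y ∈ tangentFixedPoints ρ) g).1

end Action

/-- Thurston's Stability Lemma.  Let `G` be a finitely generated group
acting on `ℝⁿ` by `C¹` diffeomorphisms with a global fixed point `x`.  If the derivative
`Dg(x)` is the identity for every `g ∈ G`, then either there is a nontrivial group
homomorphism `G → (ℝ, +)`, or `G` acts trivially. -/
theorem thurston_stability (n : ℕ) (G : Type*) [Group G] [Group.FG G]
    (ρ : G →* Equiv.Perm (EuclideanSpace ℝ (Fin n)))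
    (hdiff : ∀ g : G, ContDiff ℝ 1 (ρ g))
    (x : EuclideanSpace ℝ (Fin n)) (hfix : ∀ g : G, ρ g x = x)
    (hD : ∀ g : G, fderiv ℝ (ρ g) x = ContinuousLinearMap.id ℝ (EuclideanSpace ℝ (Fin n))) :
    (∃ φ : G →* Multiplicative ℝ, φ ≠ 1) ∨ (∀ (g : G) (y : EuclideanSpace ℝ (Fin n)), ρ g y = y) :=
  thurston_stability_general hdiff x hfix hD
end
end

section
/- Let G be a finitely generated group with an orientation preserving C^1 action on the circle and suppose there exists a G-invariant Borel probability measure on the circle. If every group homomorphism G → (ℝ,+) is trivial and every group homomorphism [G,G] → (ℝ,+) is trivial (i.e., H^1(G,ℝ) = H^1([G,G],ℝ) = 0), then the action of G factors through an action of a finite cyclic group; that is, the image of G in Diff^1_+(S^1) is a finite cyclic group. -/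
noncomputable section

open MeasureTheory

/-- The circle `S¹ = ℝ/ℤ`. -/
abbrev 𝕊 : Type := AddCircle (1 : ℝ)

/-- `F : ℝ → ℝ` is a lift of the circle bijection `f` witnessing that `f` is an
orientation preserving homeomorphism of the circle: `F` is a strictly increasing
homeomorphism of `ℝ` (equivalently, continuous and strictly increasing) satisfying
`F (x + 1) = F x + 1`, and projecting to `f`. -/
def IsOPLift (f : Equiv.Perm 𝕊) (F : ℝ → ℝ) : Prop :=
  Continuous F ∧ StrictMono F ∧ (∀ x : ℝ, F (x + 1) = F x + 1) ∧
    ∀ x : ℝ, f (x : 𝕊) = (F x : 𝕊)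

/-- `f` is an orientation preserving homeomorphism of the circle. -/
def IsOPHomeo (f : Equiv.Perm 𝕊) : Prop := ∃ F : ℝ → ℝ, IsOPLift f F

/-- `F` is a lift witnessing that `f` is an orientation preserving `C¹` diffeomorphism
of the circle: an orientation preserving lift which is `C¹` with nowhere vanishing
derivative. -/
def IsC1Lift (f : Equiv.Perm 𝕊) (F : ℝ → ℝ) : Prop :=
  IsOPLift f F ∧ ContDiff ℝ 1 F ∧ ∀ x : ℝ, deriv F x ≠ 0

/-- `f` is an orientation preserving `C¹` diffeomorphism of the circle, i.e. an element
of `Diff¹₊(S¹)`. -/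
def IsC1Diffeo (f : Equiv.Perm 𝕊) : Prop := ∃ F : ℝ → ℝ, IsC1Lift f F

/-!
Since the measure `μ` is invariant, the mean displacement of a lift, taken modulo `ℤ`, defines a
homomorphism from `G` to the circle, the rotation number, which is therefore trivial on `[G, G]`.
An element of zero rotation number has a lift with a fixed point, so it acts on the circle cut at
the image of that point as a monotone self-map of an interval, and such a map can only preserve a
finite measure by fixing almost every point. Hence `[G, G]`, being countable, has a common fixed
point `z`.

Because `H¹(G, ℝ) = 0`, the abelianization of `G` is finite and `[G, G]` is finitely generated.
Lift its action to the line, fixing a point over `z`. At any common fixed point the logarithm of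
the derivative is a homomorphism to `ℝ`, so all derivatives are `1`, and Thurston's stability
theorem makes the set of common fixed points open. The line being connected, `[G, G]` acts
trivially. The image of `G` is thus finite, and the rotation number is injective on it, because a
monotone map of the line with a fixed point and of finite order is the identity. A finite group
embedded in the circle is cyclic.
-/

open Filter Topology Asymptotics Function

theorem exists_tendsto_inv_smul_of_isBigO {α E : Type*} [NormedAddCommGroup E] [NormedSpace ℝ E]
    [ProperSpace E] {U : Ultrafilter α} {f : α → E} {M : α → ℝ} (hf : f =O[U] M) :
    ∃ l, Tendsto (fun x ↦ (M x)⁻¹ • f x) U (𝓝 l) := by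
  obtain ⟨c, hc, hbound⟩ := hf.exists_nonneg
  have hmem : ∀ᶠ x in U, (M x)⁻¹ • f x ∈ Metric.closedBall (0 : E) c := by
    filter_upwards [hbound.bound] with x hx
    rw [mem_closedBall_zero_iff, norm_smul, norm_inv]
    exact inv_mul_le_of_le_mul₀ (norm_nonneg _) hc (by rwa [mul_comm])
  obtain ⟨l, -, hl⟩ := (isCompact_closedBall (0 : E) c).ultrafilter_le_nhds
    (U.map fun x ↦ (M x)⁻¹ • f x) (le_principal_iff.2 hmem)
  exact ⟨l, hl⟩

theorem monoidHom_multiplicative_eq_one {H E : Type*} [MulOneClass H] [AddCommGroup E] [Module ℝ E]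
    [TopologicalSpace E] [SeparatingDual ℝ E] (hhom : ∀ φ : H →* Multiplicative ℝ, φ = 1)
    (Φ : H →* Multiplicative E) : Φ = 1 := by
  ext h
  refine (SeparatingDual.eq_zero_iff_forall_dual_eq_zero (R := ℝ) (Φ h).toAdd).2 fun ℓ ↦ ?_
  have hℓ := hhom ((AddMonoidHom.toMultiplicative (ℓ : E →+ ℝ)).comp Φ)
  exact congrArg Multiplicative.toAdd (DFunLike.congr_fun hℓ h)

section ThurstonStability

variable {H E : Type*} [Group H] [NormedAddCommGroup E] [MulAction H E]

/-- The total displacement `∑ s ∈ S, ‖s • x - x‖` of the point `x` under a finite set `S` of group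
elements, by which displacements are normalised in the proof of Thurston's stability theorem. -/
def totalDisplacement (S : Finset H) (x : E) : ℝ := ∑ s ∈ S, ‖s • x - x‖

theorem forall_smul_eq_self_of_totalDisplacement_eq_zero {S : Finset H}
    (hS : Subgroup.closure (S : Set H) = ⊤) {x : E} (hx : totalDisplacement S x = 0) (h : H) :
    h • x = x := by
  have hfix : ∀ s ∈ S, s • x = x := fun s hs ↦ by
    simpa [sub_eq_zero] using
      (Finset.sum_eq_zero_iff_of_nonneg fun s _ ↦ norm_nonneg (s • x - x)).1 hx s hs
  have hle : Subgroup.closure (S : Set H) ≤ MulAction.stabilizer H x :=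
    (Subgroup.closure_le _).2 hfix
  exact hle (hS ▸ Subgroup.mem_top h)

variable [NormedSpace ℝ E]

theorem smul_sub_self_mul_isLittleO {p : E} {g h : H}
    (hg : HasStrictFDerivAt (fun x : E ↦ g • x) (.id ℝ E) p)
    (hh : ContinuousAt (fun x : E ↦ h • x) p) (hp : h • p = p) :
    (fun x : E ↦ ((g * h) • x - x) - (g • x - x) - (h • x - x)) =o[𝓝 p]
      fun x : E ↦ h • x - x := by
  have htendsto : Tendsto (fun x : E ↦ (h • x, x)) (𝓝 p) (𝓝 (p, p)) := by
    simpa only [ContinuousAt, id, hp] using hh.prodMk continuousAt_id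
  refine (hg.isLittleO.comp_tendsto htendsto).congr_left fun x ↦ ?_
  simp only [comp_apply, ContinuousLinearMap.id_apply, mul_smul]
  abel

theorem smul_sub_self_isBigO_totalDisplacement {p : E} (hp : ∀ h : H, h • p = p)
    (hd : ∀ h : H, HasStrictFDerivAt (fun x : E ↦ h • x) (.id ℝ E) p) {S : Finset H}
    (hS : Subgroup.closure (S : Set H) = ⊤) (h : H) :
    (fun x : E ↦ h • x - x) =O[𝓝 p] totalDisplacement S := by
  have hcocycle (g h : H) :=
    (smul_sub_self_mul_isLittleO (hd g) (hd h).continuousAt (hp h)).isBigO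
  have hmem : h ∈ Subgroup.closure (S : Set H) := hS ▸ Subgroup.mem_top h
  induction hmem using Subgroup.closure_induction with
  | mem s hs =>
    refine IsBigO.of_norm_le fun x ↦ ?_
    exact Finset.single_le_sum (f := fun s ↦ ‖s • x - x‖) (fun _ _ ↦ norm_nonneg _) hs
  | one => simpa using isBigO_zero _ _
  | mul g h _ _ hg hh =>
    exact ((((hcocycle g h).trans hh).add hg).add hh).congr_left fun x ↦ by abel
  | inv h _ hh =>
    refine (((hcocycle h⁻¹ h).trans hh).add hh).neg_left.congr_left fun x ↦ ?_
    simp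

/- Dividing the cocycle relation `φ (g * h) = φ g + φ h + o(φ h)` for the displacements `φ` by the
total displacement of the generators makes it additive in the limit. -/
theorem exists_monoidHom_tendsto_normalized_displacement [ProperSpace E] {p : E}
    (hp : ∀ h : H, h • p = p)
    (hd : ∀ h : H, HasStrictFDerivAt (fun x : E ↦ h • x) (.id ℝ E) p) {S : Finset H}
    (hS : Subgroup.closure (S : Set H) = ⊤) {U : Ultrafilter E} (hU : (U : Filter E) ≤ 𝓝 p) :
    ∃ Φ : H →* Multiplicative E, ∀ h : H,
      Tendsto (fun x ↦ (totalDisplacement S x)⁻¹ • (h • x - x)) U (𝓝 (Φ h).toAdd) := by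
  have hO (h : H) : (fun x : E ↦ h • x - x) =O[U] totalDisplacement S :=
    (smul_sub_self_isBigO_totalDisplacement hp hd hS h).mono hU
  choose L hL using fun h ↦ exists_tendsto_inv_smul_of_isBigO (hO h)
  have hL_mul (g h : H) : L (g * h) = L g + L h := by
    have ho := ((smul_sub_self_mul_isLittleO (hd g) (hd h).continuousAt (hp h)).mono
      hU).trans_isBigO (hO h)
    have hzero : L (g * h) - L g - L h = 0 := by
      refine tendsto_nhds_unique (((hL (g * h)).sub (hL g)).sub (hL h)) ?_
      simpa only [smul_sub] using ho.tendsto_inv_smul_nhds_zero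
    rwa [sub_sub, sub_eq_zero] at hzero
  exact ⟨MonoidHom.mk' (fun h ↦ .ofAdd (L h)) fun g h ↦ by rw [hL_mul, ofAdd_add], hL⟩

/-- **Thurston's stability theorem**. If points arbitrarily close to `p` were moved, the normalised
displacements, whose norms add up to `1` over the generators, would tend to a nontrivial
homomorphism. -/
theorem eventually_forall_smul_eq_self [FiniteDimensional ℝ E] [Group.FG H]
    (hhom : ∀ φ : H →* Multiplicative ℝ, φ = 1) {p : E} (hp : ∀ h : H, h • p = p)
    (hd : ∀ h : H, HasStrictFDerivAt (fun x : E ↦ h • x) (.id ℝ E) p) :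
    ∀ᶠ x in 𝓝 p, ∀ h : H, h • x = x := by
  have : ProperSpace E := FiniteDimensional.proper_real E
  obtain ⟨S, hS⟩ := Group.FG.out (G := H)
  by_contra hmoved
  have : (𝓝 p ⊓ 𝓟 {x : E | ¬ ∀ h : H, h • x = x}).NeBot :=
    frequently_mem_iff_neBot.1 (not_eventually.1 hmoved)
  obtain ⟨U, hU⟩ : ∃ U : Ultrafilter E,
      (U : Filter E) ≤ 𝓝 p ⊓ 𝓟 {x : E | ¬ ∀ h : H, h • x = x} := ⟨_, Ultrafilter.of_le _⟩
  obtain ⟨Φ, hΦ⟩ := exists_monoidHom_tendsto_normalized_displacement hp hd hS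
    (hU.trans inf_le_left)
  have htendsto_zero : Tendsto (fun x ↦ ∑ s ∈ S, ‖(totalDisplacement S x)⁻¹ • (s • x - x)‖)
      (U : Filter E) (𝓝 0) := by
    simpa [monoidHom_multiplicative_eq_one hhom Φ] using
      tendsto_finsetSum S fun s _ ↦ (hΦ s).norm
  have hsum_eq_one :
      ∀ᶠ x in (U : Filter E), ∑ s ∈ S, ‖(totalDisplacement S x)⁻¹ • (s • x - x)‖ = 1 := by
    filter_upwards [hU (mem_inf_of_right (mem_principal_self _))] with x hx
    have hne : totalDisplacement S x ≠ 0 := fun h0 ↦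
      hx (forall_smul_eq_self_of_totalDisplacement_eq_zero hS h0)
    have hnonneg : 0 ≤ totalDisplacement S x := Finset.sum_nonneg fun _ _ ↦ norm_nonneg _
    simp_rw [norm_smul, norm_inv, ← Finset.mul_sum, Real.norm_of_nonneg hnonneg]
    exact inv_mul_cancel₀ hne
  exact zero_ne_one (tendsto_nhds_unique htendsto_zero
    (tendsto_const_nhds.congr' (hsum_eq_one.mono fun x hx ↦ hx.symm)))

end ThurstonStability

section LineActions

variable {H : Type*} [Group H] [MulAction H ℝ]

theorem deriv_smul_eq_one (hhom : ∀ φ : H →* Multiplicative ℝ, φ = 1) {p : ℝ}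
    (hp : ∀ h : H, h • p = p) (hd : ∀ h : H, DifferentiableAt ℝ (fun x : ℝ ↦ h • x) p)
    (hmono : ∀ h : H, Monotone fun x : ℝ ↦ h • x) (h : H) : deriv (fun x : ℝ ↦ h • x) p = 1 := by
  let δ (h : H) : ℝ := deriv (fun x : ℝ ↦ h • x) p
  have hδ_mul (g h : H) : δ (g * h) = δ g * δ h := by
    have hg : HasDerivAt (fun x : ℝ ↦ g • x) (δ g) (h • p) := by
      rw [hp]; exact (hd g).hasDerivAt
    simpa only [comp_def, ← mul_smul] using (hg.comp p (hd h).hasDerivAt).deriv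
  have hδ_one : δ 1 = 1 := by simp [δ]
  have hδ_pos (h : H) : 0 < δ h := by
    refine (hmono h).deriv_nonneg.lt_of_ne' fun h0 ↦ ?_
    simpa [hδ_one, h0, δ] using hδ_mul h h⁻¹
  let logδ : H →* Multiplicative ℝ := MonoidHom.mk' (fun h ↦ .ofAdd (Real.log (δ h)))
    fun g h ↦ by rw [hδ_mul, Real.log_mul (hδ_pos g).ne' (hδ_pos h).ne', ofAdd_add]
  have hlog : Real.log (δ h) = 0 := congrArg Multiplicative.toAdd (DFunLike.congr_fun (hhom logδ) h)
  exact Real.eq_one_of_pos_of_log_eq_zero (hδ_pos h) hlog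

theorem smul_eq_self_of_contDiff_of_monotone [Group.FG H]
    (hhom : ∀ φ : H →* Multiplicative ℝ, φ = 1)
    (hC : ∀ h : H, ContDiff ℝ 1 fun x : ℝ ↦ h • x) (hmono : ∀ h : H, Monotone fun x : ℝ ↦ h • x)
    {p : ℝ} (hp : ∀ h : H, h • p = p) (h : H) (x : ℝ) : h • x = x := by
  have hclosed : IsClosed {x : ℝ | ∀ h : H, h • x = x} := by
    rw [Set.ofPred_forall]
    exact isClosed_iInter fun h ↦ isClosed_eq (hC h).continuous continuous_id
  have hopen : IsOpen {x : ℝ | ∀ h : H, h • x = x} := by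
    refine isOpen_iff_mem_nhds.2 fun q hq ↦ eventually_forall_smul_eq_self hhom hq fun h ↦ ?_
    have hderiv := (hC h).contDiffAt.hasStrictDerivAt (x := q) one_ne_zero
    rw [deriv_smul_eq_one hhom hq (fun h ↦ (hC h).differentiable one_ne_zero q) hmono] at hderiv
    have hid : ContinuousLinearMap.toSpanSingleton ℝ (1 : ℝ) = .id ℝ ℝ :=
      ContinuousLinearMap.toSpanSingleton_apply_map_one ℝ (.id ℝ ℝ)
    exact hid ▸ hderiv.hasStrictFDerivAt
  have huniv := IsClopen.eq_univ ⟨hclosed, hopen⟩ ⟨p, hp⟩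
  exact huniv.symm.subset (Set.mem_univ x) h

end LineActions

theorem countable_of_group_fg (G : Type*) [Group G] [Group.FG G] : Countable G := by
  obtain ⟨_, _, _, hφ⟩ := Group.fg_iff_exists_freeGroup_hom_surjective_finite.1 ‹Group.FG G›
  exact hφ.countable

theorem finite_of_forall_monoidHom_real_eq_one {A : Type*} [CommGroup A] [Group.FG A]
    (hA : ∀ φ : A →* Multiplicative ℝ, φ = 1) : Finite A := by
  obtain ⟨ι, j, _, _, p, hp, e, ⟨Ψ⟩⟩ := CommGroup.equiv_free_prod_prod_multiplicative_zmod A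
  have hrank : IsEmpty j := by
    refine ⟨fun k ↦ ?_⟩
    let coord : A →* Multiplicative ℝ := (AddMonoidHom.toMultiplicative (Int.castAddHom ℝ)).comp
      ((Pi.evalMonoidHom _ k).comp ((MonoidHom.fst _ _).comp Ψ.toMonoidHom))
    obtain ⟨a, ha⟩ := Ψ.surjective (fun _ ↦ .ofAdd 1, 1)
    have hcoord : coord a = .ofAdd 1 := by simp [coord, ha]
    rw [hA coord] at hcoord
    exact zero_ne_one (α := ℝ) (congrArg Multiplicative.toAdd hcoord)
  have (i : ι) : NeZero (p i ^ e i) := ⟨pow_ne_zero _ (hp i).ne_zero⟩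
  have (i : ι) : Finite (Multiplicative (ZMod (p i ^ e i))) :=
    inferInstanceAs (Finite (ZMod (p i ^ e i)))
  exact Finite.of_equiv _ Ψ.symm.toEquiv

theorem finiteIndex_commutator {G : Type*} [Group G] [Group.FG G]
    (hG : ∀ φ : G →* Multiplicative ℝ, φ = 1) : (commutator G).FiniteIndex := by
  have : Group.FG (Abelianization G) := QuotientGroup.fg (commutator G)
  have : Finite (G ⧸ commutator G) :=
    finite_of_forall_monoidHom_real_eq_one (A := Abelianization G) fun _ ↦
      Abelianization.hom_ext _ _ (hG _)
  exact Subgroup.finiteIndex_of_finite_quotient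

/- For each `r`, the upper sets `F ⁻¹' Ioi r` and `Ioi r` are nested and of equal measure. -/
theorem ae_eq_self_of_monotone {α : Type*} [LinearOrder α] [DenselyOrdered α] [TopologicalSpace α]
    [OrderTopology α] [TopologicalSpace.SeparableSpace α] [MeasurableSpace α]
    [OpensMeasurableSpace α] {ν : Measure α} [IsFiniteMeasure ν] {F : α → α} (hF : Monotone F)
    (hν : MeasurePreserving F ν ν) : ∀ᵐ x ∂ν, F x = x := by
  obtain ⟨s, hs_countable, hs_dense⟩ := TopologicalSpace.exists_countable_dense α
  have hIoi (r : α) : F ⁻¹' Set.Ioi r =ᵐ[ν] Set.Ioi r := by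
    have hmeas : ν (F ⁻¹' Set.Ioi r) = ν (Set.Ioi r) :=
      hν.measure_preimage measurableSet_Ioi.nullMeasurableSet
    have hpre : MeasurableSet (F ⁻¹' Set.Ioi r) := hν.measurable measurableSet_Ioi
    rcases ((isUpperSet_Ioi r).preimage hF).total (isUpperSet_Ioi r) with hsub | hsub
    · exact ae_eq_of_subset_of_measure_ge hsub hmeas.ge hpre.nullMeasurableSet (measure_ne_top _ _)
    · exact (ae_eq_of_subset_of_measure_ge hsub hmeas.le measurableSet_Ioi.nullMeasurableSet
        (measure_ne_top _ _)).symm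
  have hlt : ∀ᵐ x ∂ν, ∀ r ∈ s, r < F x ↔ r < x :=
    (ae_ball_iff hs_countable).2 fun r _ ↦ (hIoi r).mem_iff
  filter_upwards [hlt] with x hx
  refine le_antisymm (le_of_not_gt fun hlt ↦ ?_) (le_of_not_gt fun hlt ↦ ?_)
  · obtain ⟨r, hr, hxr, hrF⟩ := hs_dense.exists_between hlt
    exact hxr.not_gt ((hx r hr).1 hrF)
  · obtain ⟨r, hr, hFr, hrx⟩ := hs_dense.exists_between hlt
    exact hFr.not_gt ((hx r hr).2 hrx)

theorem exists_eq_integral_of_continuous {X : Type*} [TopologicalSpace X] [CompactSpace X]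
    [PreconnectedSpace X] [MeasurableSpace X] [OpensMeasurableSpace X] (μ : Measure X)
    [IsProbabilityMeasure μ] {D : X → ℝ} (hD : Continuous D) : ∃ x, D x = ∫ y, D y ∂μ := by
  have hint : Integrable D μ := hD.integrable_of_hasCompactSupport (.of_compactSpace D)
  exact mem_range_of_exists_le_of_exists_ge hD (exists_le_integral hint) (exists_integral_le hint)

theorem coe_circle_eq_zero_iff {x : ℝ} : (x : 𝕊) = 0 ↔ ∃ n : ℤ, (n : ℝ) = x := by
  simp_rw [AddCircle.coe_eq_zero_iff, zsmul_one]

namespace IsOPLift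

variable {f g : Equiv.Perm 𝕊} {F K : ℝ → ℝ}

theorem one : IsOPLift 1 id :=
  ⟨continuous_id, strictMono_id, fun _ ↦ rfl, fun _ ↦ rfl⟩

theorem mul (hF : IsOPLift f F) (hK : IsOPLift g K) : IsOPLift (f * g) (F ∘ K) := by
  obtain ⟨hFc, hFm, hFp, hFf⟩ := hF
  obtain ⟨hKc, hKm, hKp, hKg⟩ := hK
  exact ⟨hFc.comp hKc, hFm.comp hKm, fun x ↦ by simp [hFp, hKp], fun x ↦ by simp [hFf, hKg]⟩

theorem pow (hF : IsOPLift f F) (n : ℕ) : IsOPLift (f ^ n) F^[n] := by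
  induction n with
  | zero => exact one
  | succ n ih => simpa only [pow_succ, iterate_succ] using ih.mul hF

theorem add_int (hF : IsOPLift f F) (n : ℤ) : IsOPLift f fun x ↦ F x + n := by
  obtain ⟨hc, hm, hp, hf⟩ := hF
  refine ⟨hc.add_const _, hm.add_const _, fun x ↦ by simp only [hp]; ring, fun x ↦ ?_⟩
  rw [hf, AddCircle.coe_add, coe_circle_eq_zero_iff.2 ⟨n, rfl⟩, add_zero]

theorem exists_apply_add_int_eq (hF : IsOPLift f F) {p q : ℝ} (hpq : f p = q) :
    ∃ n : ℤ, F p + n = q := by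
  have hzero : ((q - F p : ℝ) : 𝕊) = 0 := by
    rw [AddCircle.coe_sub, ← hF.2.2.2, hpq, sub_self]
  obtain ⟨n, hn⟩ := coe_circle_eq_zero_iff.1 hzero
  exact ⟨n, by rw [hn]; ring⟩

theorem eq_of_apply_eq (hF : IsOPLift f F) (hK : IsOPLift f K) {q : ℝ} (hq : F q = K q) :
    F = K := by
  refine (AddCircle.isCoveringMap_coe (1 : ℝ)).eq_of_comp_eq hF.1 hK.1 (funext fun x ↦ ?_) q hq
  exact (hF.2.2.2 x).symm.trans (hK.2.2.2 x)

theorem exists_eq_add_int (hF : IsOPLift f F) (hK : IsOPLift f K) :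
    ∃ n : ℤ, K = fun x ↦ F x + n := by
  obtain ⟨n, hn⟩ := hF.exists_apply_add_int_eq (hK.2.2.2 0)
  exact ⟨n, hK.eq_of_apply_eq (hF.add_int n) hn.symm⟩

theorem eq_one_of_lift_id (hf : IsOPLift f id) : f = 1 :=
  Equiv.ext fun z ↦ QuotientAddGroup.induction_on z hf.2.2.2

theorem eq_one_of_isOfFinOrder (hF : IsOPLift f F) {q : ℝ} (hq : F q = q)
    (hf : IsOfFinOrder f) : f = 1 := by
  obtain ⟨n, hn, hfn⟩ := isOfFinOrder_iff_pow_eq_one.1 hf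
  have hiter : F^[n] = id :=
    (hfn ▸ hF.pow n).eq_of_apply_eq one (iterate_fixed hq n)
  have hid : F = id := funext fun x ↦
    (Commute.id_right.iterate_pos_eq_iff_map_eq hF.2.1.monotone strictMono_id hn).1
      (by rw [hiter, iterate_id])
  exact eq_one_of_lift_id (hid ▸ hF)

protected theorem continuous (hF : IsOPLift f F) : Continuous f :=
  (QuotientAddGroup.isQuotientMap_mk _).continuous_iff.2 <|
    ((AddCircle.continuous_mk' 1).comp hF.1).congr fun x ↦ (hF.2.2.2 x).symm

theorem equivIco_apply (hF : IsOPLift f F) {q : ℝ} (hq : F q = q) (z : 𝕊) :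
    (AddCircle.equivIco 1 q (f z) : ℝ) = F (AddCircle.equivIco 1 q z) := by
  obtain ⟨x, hx⟩ : ∃ x, AddCircle.equivIco 1 q z = x := ⟨_, rfl⟩
  have hmem : F x ∈ Set.Ico q (q + 1) := by
    have hq_add_one : F (q + 1) = q + 1 := by rw [hF.2.2.1, hq]
    exact ⟨hq.symm.trans_le (hF.2.1.monotone x.2.1), (hF.2.1 x.2.2).trans_eq hq_add_one⟩
  have hfz : f z = F x := by rw [← hF.2.2.2, ← hx, AddCircle.coe_equivIco]
  rw [hfz, AddCircle.equivIco_coe_eq hmem, hx]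

theorem ae_eq_self_of_apply_eq_self (hF : IsOPLift f F) {q : ℝ} (hq : F q = q) {μ : Measure 𝕊}
    [IsFiniteMeasure μ] (hf : MeasurePreserving f μ μ) : ∀ᵐ z ∂μ, f z = z := by
  let s (z : 𝕊) : ℝ := AddCircle.equivIco 1 q z
  have hs : Measurable s :=
    measurable_subtype_coe.comp (AddCircle.measurableEquivIco 1 q).measurable
  have hF_pres : MeasurePreserving F (μ.map s) (μ.map s) :=
    hs.measurePreserving μ |>.of_semiconj hf (hF.equivIco_apply hq) hF.1.measurable
  filter_upwards [ae_of_ae_map hs.aemeasurable (ae_eq_self_of_monotone hF.2.1.monotone hF_pres)]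
    with z hz
  rw [← AddCircle.coe_equivIco (p := 1) (a := q) (y := z), hF.2.2.2]
  exact congrArg _ hz

/-- The displacement `F x - x` of a lift `F`, which is `1`-periodic, as a function on the circle. -/
def displacement (hF : IsOPLift f F) : 𝕊 → ℝ :=
  Periodic.lift (f := fun x ↦ F x - x) fun x ↦ by simp only [hF.2.2.1]; ring

theorem displacement_coe (hF : IsOPLift f F) (x : ℝ) : hF.displacement x = F x - x := rfl

theorem continuous_displacement (hF : IsOPLift f F) : Continuous hF.displacement :=
  (QuotientAddGroup.isQuotientMap_mk _).continuous_iff.2 (hF.1.sub continuous_id)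

theorem integrable_displacement (hF : IsOPLift f F) (μ : Measure 𝕊) [IsFiniteMeasure μ] :
    Integrable hF.displacement μ :=
  hF.continuous_displacement.integrable_of_hasCompactSupport (.of_compactSpace _)

theorem displacement_mul (hF : IsOPLift f F) (hK : IsOPLift g K) (z : 𝕊) :
    (hF.mul hK).displacement z = hF.displacement (g z) + hK.displacement z := by
  induction z using QuotientAddGroup.induction_on with | H x => ?_
  rw [hK.2.2.2]
  simp only [displacement_coe, comp_apply]
  ring

theorem displacement_add_int (hF : IsOPLift f F) (n : ℤ) (z : 𝕊) :
    (hF.add_int n).displacement z = hF.displacement z + n := by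
  induction z using QuotientAddGroup.induction_on with | H x => ?_
  simp only [displacement_coe]
  ring

/-- The mean displacement of a lift with respect to a measure `μ` on the circle. For an invariant
probability measure it is the translation number of the lift. -/
def meanDisplacement (hF : IsOPLift f F) (μ : Measure 𝕊) : ℝ := ∫ z, hF.displacement z ∂μ

variable {μ : Measure 𝕊}

theorem meanDisplacement_mul [IsFiniteMeasure μ] (hF : IsOPLift f F) (hK : IsOPLift g K)
    (hg : MeasurePreserving g μ μ) :
    (hF.mul hK).meanDisplacement μ = hF.meanDisplacement μ + hK.meanDisplacement μ := by
  have hcomp : ∫ z, hF.displacement (g z) ∂μ = ∫ z, hF.displacement z ∂μ := by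
    conv_rhs => rw [← hg.map_eq]
    exact (integral_map hg.aemeasurable hF.continuous_displacement.aestronglyMeasurable).symm
  calc (hF.mul hK).meanDisplacement μ
      = ∫ z, (hF.displacement (g z) + hK.displacement z) ∂μ :=
        integral_congr_ae (.of_forall (hF.displacement_mul hK))
    _ = (∫ z, hF.displacement (g z) ∂μ) + ∫ z, hK.displacement z ∂μ :=
        integral_add (hg.integrable_comp_of_integrable (hF.integrable_displacement μ))
          (hK.integrable_displacement μ)
    _ = hF.meanDisplacement μ + hK.meanDisplacement μ := by rw [hcomp]; rfl

theorem meanDisplacement_add_int [IsProbabilityMeasure μ] (hF : IsOPLift f F) (n : ℤ) :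
    (hF.add_int n).meanDisplacement μ = hF.meanDisplacement μ + n := by
  calc (hF.add_int n).meanDisplacement μ
      = ∫ z, (hF.displacement z + n) ∂μ :=
        integral_congr_ae (.of_forall (hF.displacement_add_int n))
    _ = hF.meanDisplacement μ + n := by
        rw [integral_add (hF.integrable_displacement μ) (integrable_const _), meanDisplacement]
        simp

theorem exists_apply_eq_self_of_meanDisplacement_eq_zero [IsProbabilityMeasure μ]
    (hF : IsOPLift f F) (hμ : hF.meanDisplacement μ = 0) : ∃ q, F q = q := by
  obtain ⟨z, hz⟩ := exists_eq_integral_of_continuous μ hF.continuous_displacement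
  obtain ⟨q, rfl⟩ := QuotientAddGroup.mk_surjective z
  exact ⟨q, sub_eq_zero.1 (hz.trans hμ)⟩

theorem coe_meanDisplacement_eq [IsProbabilityMeasure μ] (hF : IsOPLift f F) (hK : IsOPLift f K) :
    (hF.meanDisplacement μ : 𝕊) = hK.meanDisplacement μ := by
  obtain ⟨n, rfl⟩ := hF.exists_eq_add_int hK
  rw [meanDisplacement_add_int, AddCircle.coe_add, coe_circle_eq_zero_iff.2 ⟨n, rfl⟩, add_zero]

end IsOPLift

section RotationNumber

variable {H : Type*} [Group H] {σ : H →* Equiv.Perm 𝕊} {μ : Measure 𝕊} [IsProbabilityMeasure μ]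

/-- The rotation number homomorphism of an action on the circle preserving the orientation and a
probability measure `μ`: it sends `h` to the mean displacement of any lift of `h`, modulo `ℤ`. -/
def rotationHom (hσ : ∀ h, IsOPHomeo (σ h)) (hμ : ∀ h, MeasurePreserving (σ h) μ μ) :
    H →* Multiplicative 𝕊 :=
  MonoidHom.mk' (fun h ↦ .ofAdd ((hσ h).choose_spec.meanDisplacement μ : 𝕊)) fun g h ↦ by
    have hgh : IsOPLift (σ (g * h)) _ := map_mul σ g h ▸ (hσ g).choose_spec.mul (hσ h).choose_spec
    rw [(hσ (g * h)).choose_spec.coe_meanDisplacement_eq hgh, ← ofAdd_add, ← AddCircle.coe_add,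
      ← IsOPLift.meanDisplacement_mul _ _ (hμ h)]
    rfl

theorem exists_lift_apply_eq_self_of_rotationHom_eq_one {hσ : ∀ h, IsOPHomeo (σ h)}
    {hμ : ∀ h, MeasurePreserving (σ h) μ μ} {h : H} (hh : rotationHom hσ hμ h = 1) :
    ∃ F, IsOPLift (σ h) F ∧ ∃ q, F q = q := by
  obtain ⟨n, hn⟩ := coe_circle_eq_zero_iff.1 (congrArg Multiplicative.toAdd hh)
  have hF := (hσ h).choose_spec.add_int (-n)
  refine ⟨_, hF, hF.exists_apply_eq_self_of_meanDisplacement_eq_zero (μ := μ) ?_⟩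
  rw [(hσ h).choose_spec.meanDisplacement_add_int, ← hn]
  simp

theorem exists_forall_apply_eq_self_of_rotationHom_eq_one {hσ : ∀ h, IsOPHomeo (σ h)}
    {hμ : ∀ h, MeasurePreserving (σ h) μ μ} (N : Subgroup H) [Countable N]
    (hN : N ≤ (rotationHom hσ hμ).ker) : ∃ z, ∀ h ∈ N, σ h z = z := by
  have hae : ∀ᵐ z ∂μ, ∀ h : N, σ h z = z := ae_all_iff.2 fun h ↦ by
    obtain ⟨F, hF, q, hq⟩ := exists_lift_apply_eq_self_of_rotationHom_eq_one (hN h.2)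
    exact hF.ae_eq_self_of_apply_eq_self hq (hμ h)
  exact hae.exists.imp fun z hz h hh ↦ hz ⟨h, hh⟩

theorem isCyclic_of_injective_multiplicative_circle {A : Type*} [Group A] [Finite A]
    (τ : A →* Multiplicative 𝕊) (hτ : Injective τ) : IsCyclic A := by
  let χ : A →* ℂ := Circle.coeHom.comp ((AddMonoidHom.toMultiplicativeLeft
    { toFun := fun x ↦ .ofMul x.toCircle
      map_zero' := AddCircle.toCircle_zero
      map_add' := AddCircle.toCircle_add }).comp τ)
  exact isCyclic_of_injective_ringHom χ
    (Circle.coe_injective.comp ((AddCircle.injective_toCircle one_ne_zero).comp hτ))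

theorem isCyclic_of_finite_of_measurePreserving {Γ : Subgroup (Equiv.Perm 𝕊)} [Finite Γ]
    (hΓ : ∀ f ∈ Γ, IsOPHomeo f) (hμ : ∀ f ∈ Γ, MeasurePreserving f μ μ) : IsCyclic Γ := by
  refine isCyclic_of_injective_multiplicative_circle
    (rotationHom (σ := Γ.subtype) (fun f ↦ hΓ f f.2) fun f ↦ hμ f f.2) ?_
  refine (injective_iff_map_eq_one _).2 fun f hf ↦ ?_
  obtain ⟨F, hF, q, hq⟩ := exists_lift_apply_eq_self_of_rotationHom_eq_one hf
  exact Subtype.ext (hF.eq_one_of_isOfFinOrder hq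
    (Γ.subtype.isOfFinOrder (isOfFinOrder_of_finite f)))

end RotationNumber

theorem IsC1Diffeo.isOPHomeo {f : Equiv.Perm 𝕊} (hf : IsC1Diffeo f) : IsOPHomeo f :=
  hf.imp fun _ hF ↦ hF.1

theorem IsOPHomeo.continuous {f : Equiv.Perm 𝕊} (hf : IsOPHomeo f) : Continuous f :=
  hf.elim fun _ hF ↦ hF.continuous

/- The lifts fixing a point over the global fixed point `z` form an action on the line. -/
theorem eq_one_of_isC1Diffeo_of_forall_apply_eq_self {H : Type*} [Group H] [Group.FG H]
    (hhom : ∀ φ : H →* Multiplicative ℝ, φ = 1) {σ : H →* Equiv.Perm 𝕊}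
    (hσ : ∀ h, IsC1Diffeo (σ h)) {z : 𝕊} (hz : ∀ h, σ h z = z) : σ = 1 := by
  obtain ⟨p, rfl⟩ := QuotientAddGroup.mk_surjective z
  have hlift (h : H) : ∃ F, IsOPLift (σ h) F ∧ ContDiff ℝ 1 F ∧ F p = p := by
    obtain ⟨F, hF, hFC, -⟩ := hσ h
    obtain ⟨n, hn⟩ := hF.exists_apply_add_int_eq (hz h)
    exact ⟨_, hF.add_int n, hFC.add contDiff_const, hn⟩
  choose F hF hFC hFp using hlift
  have hF_one : F 1 = id :=
    (hF 1).eq_of_apply_eq (map_one σ ▸ IsOPLift.one) (hFp 1)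
  have hF_mul (g h : H) : F (g * h) = F g ∘ F h :=
    (hF (g * h)).eq_of_apply_eq (map_mul σ g h ▸ (hF g).mul (hF h)) (q := p) (by simp [hFp])
  let _ : MulAction H ℝ :=
    { smul := F, one_smul := congrFun hF_one, mul_smul := fun g h ↦ congrFun (hF_mul g h) }
  ext1 h
  refine IsOPLift.eq_one_of_lift_id ?_
  have hF_id : F h = id := funext <|
    smul_eq_self_of_contDiff_of_monotone hhom hFC (fun h ↦ (hF h).2.1.monotone) hFp h
  exact hF_id ▸ hF h

theorem invariant_measure_action_factors_finite_cyclic_general {G : Type*} [Group G] [Group.FG G]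
    {ρ : G →* Equiv.Perm 𝕊} (hρ : ∀ g, IsOPHomeo (ρ g)) (hC1 : ∀ g ∈ commutator G, IsC1Diffeo (ρ g))
    {μ : Measure 𝕊} [IsProbabilityMeasure μ] (hinv : ∀ g, Measure.map (ρ g) μ = μ)
    (hG : ∀ φ : G →* Multiplicative ℝ, φ = 1)
    (hcomm : ∀ φ : commutator G →* Multiplicative ℝ, φ = 1) :
    Finite ρ.range ∧ IsCyclic ρ.range := by
  have hμ (g : G) : MeasurePreserving (ρ g) μ μ := ⟨(hρ g).continuous.measurable, hinv g⟩
  have : Countable G := countable_of_group_fg G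
  have : (commutator G).FiniteIndex := finiteIndex_commutator hG
  obtain ⟨z, hz⟩ := exists_forall_apply_eq_self_of_rotationHom_eq_one (commutator G)
    (Abelianization.commutator_subset_ker (rotationHom hρ hμ))
  have hrestrict : ρ.comp (commutator G).subtype = 1 :=
    eq_one_of_isC1Diffeo_of_forall_apply_eq_self hcomm (fun g ↦ hC1 g g.2) fun g ↦ hz g g.2
  have hker : commutator G ≤ ρ.ker := fun g hg ↦
    MonoidHom.mem_ker.2 (DFunLike.congr_fun hrestrict ⟨g, hg⟩)
  have : ρ.ker.FiniteIndex := Subgroup.finiteIndex_of_le hker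
  have hfinite : Finite ρ.range :=
    Finite.of_equiv _ (QuotientGroup.quotientKerEquivRange ρ).toEquiv
  refine ⟨hfinite, isCyclic_of_finite_of_measurePreserving (μ := μ) ?_ ?_⟩
  · rintro _ ⟨g, rfl⟩
    exact hρ g
  · rintro _ ⟨g, rfl⟩
    exact hμ g

/-- Let `G` be a finitely generated group with an orientation preserving
`C¹` action on the circle admitting an invariant Borel probability measure.  If every
group homomorphism `G → (ℝ, +)` is trivial and every group homomorphism
`[G, G] → (ℝ, +)` is trivial, then the action factors through a finite cyclic group:
the image of `G` in `Diff¹₊(S¹)` is a finite cyclic group. -/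
theorem invariant_measure_action_factors_finite_cyclic
    (G : Type*) [Group G] [Group.FG G]
    (ρ : G →* Equiv.Perm 𝕊) (hρ : ∀ g : G, IsC1Diffeo (ρ g))
    (μ : Measure 𝕊) [IsProbabilityMeasure μ]
    (hinv : ∀ g : G, Measure.map (ρ g) μ = μ)
    (h1 : ∀ φ : G →* Multiplicative ℝ, φ = 1)
    (h2 : ∀ φ : ↥(commutator G) →* Multiplicative ℝ, φ = 1) :
    Finite ρ.range ∧ IsCyclic ρ.range :=
  invariant_measure_action_factors_finite_cyclic_general (fun g ↦ (hρ g).isOPHomeo) (fun g _ ↦ hρ g)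
    hinv h1 h2
end
end
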